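/- Let G be a finite simple graph, let D ≥ 1 be an integer, and let S be a set of vertices such that every vertex x with deg_G(x) ≥ D has a neighbor in S. Let u, v be vertices and let P be a walk from u to v whose support contains a vertex x with deg_G(x) ≥ D. Then there exists s ∈ S with d_G(u,s) + d_G(s,v) ≤ |P| + 2, where |P| is the number of edges of P. In particular, if some walk from u to v has maximum vertex degree in [D, 2D], then d_G(u,v) ≤ min_{s ∈ S} (d_G(u,s) + d_G(s,v)) ≤ d_D(u,v) + 2. -/

import Mathlib

section Detour

variable {V : Type*} {G : SimpleGraph V} {u v x s : V}

theorem dist_add_dist_le_length_of_mem_support (P : G.Walk u v) (hx : x ∈ P.support) :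
    G.dist u x + G.dist x v ≤ P.length := by
  obtain ⟨p, q, rfl⟩ := SimpleGraph.Walk.mem_support_iff_exists_append.mp hx
  rw [SimpleGraph.Walk.length_append]
  exact Nat.add_le_add (SimpleGraph.dist_le p) (SimpleGraph.dist_le q)

theorem dist_add_dist_le_length_add_two_mul_dist (P : G.Walk u v) (hx : x ∈ P.support)
    (hxs : G.Reachable x s) : G.dist u s + G.dist s v ≤ P.length + 2 * G.dist x s :=
  calc
    G.dist u s + G.dist s v
    _ ≤ (G.dist u x + G.dist x s) + (G.dist s x + G.dist x v) :=
      Nat.add_le_add (hxs.dist_triangle_right u) (hxs.symm.dist_triangle_left v)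
    _ = (G.dist u x + G.dist x v) + 2 * G.dist x s := by
      rw [SimpleGraph.dist_comm (u := s)]
      ring
    _ ≤ P.length + 2 * G.dist x s :=
      Nat.add_le_add_right (dist_add_dist_le_length_of_mem_support P hx) _

theorem hitting_set_detour_general {H S : Set V} (hS : ∀ x ∈ H, ∃ s ∈ S, G.Adj x s)
    (P : G.Walk u v) (hP : ∃ x ∈ P.support, x ∈ H) :
    ∃ s ∈ S, G.dist u v ≤ G.dist u s + G.dist s v ∧
      G.dist u s + G.dist s v ≤ P.length + 2 := by
  obtain ⟨x, hxP, hxH⟩ := hP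
  obtain ⟨s, hsS, hxs⟩ := hS x hxH
  have hux : G.Reachable u x := by
    classical exact (P.takeUntil x hxP).reachable
  have hdetour : G.dist u s + G.dist s v ≤ P.length + 2 * G.dist x s :=
    dist_add_dist_le_length_add_two_mul_dist P hxP hxs.reachable
  rw [SimpleGraph.dist_eq_one_iff_adj.mpr hxs] at hdetour
  exact ⟨s, hsS, (hux.trans hxs.reachable).dist_triangle_left v, hdetour⟩

end Detour

/-- If every vertex of degree at least `D` has a neighbor in `S`, and a walk `P` from
`u` to `v` passes through some vertex of degree at least `D`, then some `s ∈ S`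
satisfies `d(u,v) ≤ d(u,s) + d(s,v) ≤ |P| + 2`. -/
theorem hitting_set_detour {V : Type*} [Fintype V]
    (G : SimpleGraph V) [DecidableRel G.Adj] (D : ℕ) (hD : 1 ≤ D) (S : Set V)
    (hS : ∀ x : V, D ≤ G.degree x → ∃ s ∈ S, G.Adj x s)
    (u v : V) (P : G.Walk u v) (hx : ∃ x ∈ P.support, D ≤ G.degree x) :
    ∃ s ∈ S, G.dist u v ≤ G.dist u s + G.dist s v ∧
      G.dist u s + G.dist s v ≤ P.length + 2 :=
  hitting_set_detour_general (H := {x | D ≤ G.degree x}) hS P hx
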